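/- Let S and T be semigroups, φ: S → T a semigroup homomorphism, and A ⊆ S. If A is central in S and φ(S) is piecewise syndetic in T, then φ(A) is central in T. -/

import Mathlib

/-- Product of ultrafilters on a semigroup `S` (the restriction to `βS` of the
Stone–Čech extension of the multiplication):
`A ∈ umul p q ↔ {x | {y | x * y ∈ A} ∈ q} ∈ p`. -/
def umul {S : Type*} [Semigroup S] (p q : Ultrafilter S) : Ultrafilter S :=
  p.bind fun x => q.map (x * ·)

/-- `p` is a minimal idempotent of `(βS, ·)`: `p` is idempotent and minimal for the
order `q ≤ p ↔ q·p = p·q = q` on idempotents. -/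
def IsMinimalIdempotent {S : Type*} [Semigroup S] (p : Ultrafilter S) : Prop :=
  umul p p = p ∧ ∀ q : Ultrafilter S, umul q q = q →
    umul q p = q → umul p q = q → q = p

/-- `A` is central in the semigroup `(S, ·)`: `A` belongs to some minimal idempotent
ultrafilter. -/
def Central {S : Type*} [Semigroup S] (A : Set S) : Prop :=
  ∃ p : Ultrafilter S, IsMinimalIdempotent p ∧ A ∈ p


/-- `P ⊆ T` is piecewise syndetic: there is a finite `F ⊆ T` such that for every
finite `G ⊆ T` there exists `x ∈ T` with `Gx ⊆ ⋃_{t ∈ F} t⁻¹P`. -/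
def PiecewiseSyndetic {T : Type*} [Semigroup T] (P : Set T) : Prop :=
  ∃ F : Finset T, ∀ G : Finset T, ∃ x : T, ∀ g ∈ G, ∃ t ∈ F, t * (g * x) ∈ P

open Filter

attribute [local instance] Ultrafilter.semigroup

/-- In a compact Hausdorff semigroup with continuous right translations, the left ideal `M * q`
contains an element `u` of a minimal left ideal, that is, `u ∈ M * (y * u)` for every `y`. -/
theorem exists_forall_mul_mul_eq_of_compact_t2 {M : Type*} [Semigroup M] [TopologicalSpace M]
    [CompactSpace M] [T2Space M] (hcont : ∀ r : M, Continuous (· * r)) (q : M) :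
    ∃ c : M, ∀ y : M, ∃ d : M, d * (y * (c * q)) = c * q := by
  have closed_range (r : M) : IsClosed (Set.range (· * r)) :=
    (isCompact_range (hcont r)).isClosed
  let leftIdeals : Set (Set M) := {N | IsClosed N ∧ N.Nonempty ∧ ∀ x, ∀ y ∈ N, x * y ∈ N}
  obtain ⟨L, hLq, hL⟩ : ∃ L, L ⊆ Set.range (· * q) ∧ Minimal (· ∈ leftIdeals) L := by
    refine zorn_superset_nonempty leftIdeals (fun c hcs hc hcne => ?_) _ ?_
    · refine ⟨⋂₀ c, ⟨isClosed_sInter fun t ht => (hcs ht).1, ?_, fun x y hy => ?_⟩, fun s hs =>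
        Set.sInter_subset_of_mem hs⟩
      · have := hcne.coe_sort
        rw [Set.sInter_eq_iInter]
        exact IsCompact.nonempty_iInter_of_directed_nonempty_isCompact_isClosed _
          (DirectedOn.directed_val (IsChain.directedOn hc.symm)) (fun i => (hcs i.prop).2.1)
          (fun i => (hcs i.prop).1.isCompact) (fun i => (hcs i.prop).1)
      · exact fun t ht => (hcs ht).2.2 x y (hy t ht)
    · refine ⟨closed_range q, ⟨_, q, rfl⟩, ?_⟩
      rintro x _ ⟨z, rfl⟩
      exact ⟨x * z, mul_assoc _ _ _⟩
  obtain ⟨-, ⟨u, hu⟩, hmul⟩ := hL.prop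
  obtain ⟨c, rfl⟩ := hLq hu
  refine ⟨c, fun y => ?_⟩
  have hrange : Set.range (· * (y * (c * q))) = L := by
    refine hL.eq_of_subset ⟨closed_range _, ⟨_, y, rfl⟩, ?_⟩ ?_
    · rintro x _ ⟨z, rfl⟩
      exact ⟨x * z, mul_assoc _ _ _⟩
    · rintro _ ⟨z, rfl⟩
      exact hmul _ _ (hmul _ _ hu)
  rwa [← hrange] at hu

theorem umul_eq_mul {S : Type*} [Semigroup S] (p q : Ultrafilter S) : umul p q = p * q := rfl

/-- A minimal idempotent `p` generates a minimal left ideal of `βS`. -/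
theorem IsMinimalIdempotent.exists_mul_mul_eq {S : Type*} [Semigroup S] {p : Ultrafilter S}
    (hp : IsMinimalIdempotent p) (w : Ultrafilter S) : ∃ s, s * (w * p) = p := by
  obtain ⟨hpp, hmin⟩ := hp
  simp only [umul_eq_mul] at hpp hmin
  obtain ⟨_, ⟨s, rfl⟩, hi⟩ := exists_idempotent_in_compact_subsemigroup
    (Ultrafilter.continuous_mul_left (M := S)) (Set.range (· * (w * p))) ⟨_, p, rfl⟩
    (isCompact_range (Ultrafilter.continuous_mul_left _)) (by
      rintro _ ⟨x, rfl⟩ _ ⟨y, rfl⟩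
      exact ⟨x * (w * p) * y, mul_assoc _ _ _⟩)
  simp only at hi
  have hip : s * (w * p) * p = s * (w * p) := by simp only [mul_assoc, hpp]
  refine ⟨p * s, ?_⟩
  rw [mul_assoc]
  apply hmin
  · rw [mul_assoc, ← mul_assoc (s * (w * p)), hip, hi]
  · rw [mul_assoc, hip]
  · rw [← mul_assoc, hpp]

theorem Ultrafilter.map_mulHom_mul {S T : Type*} [Semigroup S] [Semigroup T] (φ : S →ₙ* T)
    (p q : Ultrafilter S) : (p * q).map φ = p.map φ * q.map φ := by
  refine Ultrafilter.coe_inj.mp (Filter.ext' fun P => ?_)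
  simp [Ultrafilter.eventually_mul, Filter.eventually_map]

/-- A piecewise syndetic set belongs to an ultrafilter lying in a minimal left ideal of `βT`. -/
theorem PiecewiseSyndetic.exists_mem_ultrafilter {T : Type*} [Semigroup T] {P : Set T}
    (hP : PiecewiseSyndetic P) :
    ∃ v : Ultrafilter T, P ∈ v ∧ ∀ y, ∃ d, d * (y * v) = v := by
  obtain ⟨F, hF⟩ := hP
  choose x hx using hF
  obtain ⟨q, hq⟩ : ∃ q : Ultrafilter T, ∀ g, ∀ᶠ z in q, ∃ t ∈ F, t * (g * z) ∈ P := by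
    refine ⟨Ultrafilter.of (map x atTop), fun g => ?_⟩
    refine Ultrafilter.of_le (map x atTop) (eventually_map.2 ?_)
    filter_upwards [eventually_ge_atTop {g}] with G hG
    exact hx G g (hG (Finset.mem_singleton_self g))
  obtain ⟨c, hc⟩ :=
    exists_forall_mul_mul_eq_of_compact_t2 (Ultrafilter.continuous_mul_left (M := T)) q
  have hu : ∀ᶠ z in (c * q : Ultrafilter T), ∃ t ∈ F, t * z ∈ P :=
    (Ultrafilter.eventually_mul _ _ _).2 (Eventually.of_forall hq)
  obtain ⟨t, -, ht⟩ : ∃ t ∈ F, {z | t * z ∈ P} ∈ (c * q : Ultrafilter T) := by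
    refine (Ultrafilter.finite_biUnion_mem_iff F.finite_toSet).1 ?_
    filter_upwards [hu] with z hz
    simpa using hz
  have htu : ∀ᶠ z in (pure t * (c * q) : Ultrafilter T), z ∈ P := by
    rw [Ultrafilter.eventually_mul]
    exact eventually_pure.2 ht
  refine ⟨pure t * (c * q), htu, fun y => ?_⟩
  obtain ⟨d, hd⟩ := hc (y * pure t)
  refine ⟨pure t * d, ?_⟩
  rw [mul_assoc, ← mul_assoc y, hd]

/-- If `φ : S → T` is a semigroup homomorphism, `A` is central in `S` and `φ(S)` is
piecewise syndetic in `T`, then `φ(A)` is central in `T`. -/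
theorem stmt_19 {S T : Type*} [Semigroup S] [Semigroup T] (φ : S →ₙ* T)
    (A : Set S) (hA : Central A) (hφ : PiecewiseSyndetic (Set.range φ)) :
    Central (φ '' A) := by
  obtain ⟨p, hp, hAp⟩ := hA
  obtain ⟨v, hv, hmin⟩ := hφ.exists_mem_ultrafilter
  obtain ⟨w, rfl⟩ : ∃ w : Ultrafilter S, w.map φ = v := by
    have : NeBot (comap φ (v : Filter T)) := comap_neBot_iff_compl_range.2 fun h =>
      Ultrafilter.compl_notMem_iff.2 hv h
    refine ⟨Ultrafilter.of (comap φ v), Ultrafilter.coe_le_coe.1 ?_⟩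
    exact map_le_iff_le_comap.2 (Ultrafilter.of_le _)
  obtain ⟨s, hs⟩ := hp.exists_mul_mul_eq w
  have he : s.map φ * (w.map φ * p.map φ) = p.map φ := by
    rw [← Ultrafilter.map_mulHom_mul, ← Ultrafilter.map_mulHom_mul, hs]
  refine ⟨p.map φ, ⟨?_, fun f hf hfe hef => ?_⟩, image_mem_map hAp⟩
  · rw [umul_eq_mul, ← Ultrafilter.map_mulHom_mul, ← umul_eq_mul, hp.1]
  · rw [umul_eq_mul] at hf hfe hef
    obtain ⟨d, hd⟩ := hmin (f * s.map φ)
    have hdf : d * f = w.map φ * p.map φ := by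
      rw [← hfe, ← hd]
      nth_rewrite 1 [← he]
      simp only [mul_assoc]
    calc f = s.map φ * (d * f) * f := by rw [hdf, he, hef]
      _ = p.map φ := by rw [mul_assoc, mul_assoc, hf, hdf, he]
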